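/- arXiv:1012.3179 — 2 statements merged into one kernel-verified Lean document; each statement's English description precedes it below -/
import Mathlib

section
/- Let $\lambda_1,\dots,\lambda_5$ be nonzero complex numbers and define $W:\mathbb{C}^6\to\mathbb{C}$ by $W(c_1,\tilde c_1,c_2,\tilde c_2,c_3,\tilde c_3)=\lambda_1 c_1\tilde c_2\tilde c_3+\lambda_2 \tilde c_1 c_2 c_3+\lambda_3 (c_1\tilde c_1)^2+\lambda_4 (c_2\tilde c_2)^2+\lambda_5 (c_3\tilde c_3)^2$. If at a point $(c_1,\tilde c_1,c_2,\tilde c_2,c_3,\tilde c_3)\in\mathbb{C}^6$ all six complex partial derivatives of $W$ vanish and also $W=0$, then all of the following products vanish: $c_1\tilde c_1=c_2\tilde c_2=c_3\tilde c_3=0$, $c_1\tilde c_2=c_1\tilde c_3=\tilde c_2\tilde c_3=0$, and $\tilde c_1 c_2=\tilde c_1 c_3=c_2 c_3=0$ (i.e., at most one of $\{c_1,\tilde c_2,\tilde c_3\}$ and at most one of $\{\tilde c_1,c_2,c_3\}$ is nonzero). -/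
/-!
Weighting each F-term by its own modulus, the vacuum equations say that the two cubic terms `A`, `B`
and the three quartic terms `Xᵢ` of `W` satisfy `A + 2Xᵢ = B + 2Xᵢ = 0`. Hence
`2W = 2A + 2B + 2(X₁ + X₂ + X₃) = A`, and `W = 0` forces `A = B = 2Xᵢ = 0`. The quartic part of each
F-term is a multiple of `2cᵢc̃ᵢ = 0`, so its cubic part vanishes as well: at most one of
`c₁, c̃₂, c̃₃` and at most one of `c̃₁, c₂, c₃` is nonzero. Therefore the products `xᵢ = cᵢc̃ᵢ`
satisfy `xᵢxⱼ = 0` for `i ≠ j`, and multiplying `W = X₁ + X₂ + X₃ = 0` by `xᵢ` leaves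
`λᵢ₊₂xᵢ³ = 0`. No division by two occurs, so the argument is valid in every characteristic.
-/

section Algebra

variable {R : Type*} [CommRing R]

/-- The superpotential `W` of the bundle moduli at the stability wall, with couplings
`l1, …, l5 = λ₁, …, λ₅` and with `tci` standing for `c̃ᵢ`. -/
def superpotential (l1 l2 l3 l4 l5 c1 tc1 c2 tc2 c3 tc3 : R) : R :=
  l1 * c1 * tc2 * tc3 + l2 * tc1 * c2 * c3 +
    l3 * (c1 * tc1) ^ 2 + l4 * (c2 * tc2) ^ 2 + l5 * (c3 * tc3) ^ 2

/-- The F-term `∂W/∂x` of a modulus `x` that enters `W` through the cubic term `l * x * u * v` and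
the quartic term `m * (x * y) ^ 2`. It is given by its formula, so as to make sense over a ring. -/
def fTerm (l m x y u v : R) : R :=
  l * u * v + 2 * m * x * y ^ 2

/-- The equations of a supersymmetric Minkowski vacuum: all six F-terms and `W` vanish. The last two
arguments of `fTerm` follow the cyclic orders of `c₁, c̃₂, c̃₃` and `c̃₁, c₂, c₃`, under which the
equations are symmetric. -/
structure IsMinkowskiVacuum (l1 l2 l3 l4 l5 c1 tc1 c2 tc2 c3 tc3 : R) : Prop where
  fTerm_c1 : fTerm l1 l3 c1 tc1 tc2 tc3 = 0
  fTerm_tc1 : fTerm l2 l3 tc1 c1 c2 c3 = 0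
  fTerm_c2 : fTerm l2 l4 c2 tc2 c3 tc1 = 0
  fTerm_tc2 : fTerm l1 l4 tc2 c2 tc3 c1 = 0
  fTerm_c3 : fTerm l2 l5 c3 tc3 tc1 c2 = 0
  fTerm_tc3 : fTerm l1 l5 tc3 c3 c1 tc2 = 0
  superpotential_eq_zero : superpotential l1 l2 l3 l4 l5 c1 tc1 c2 tc2 c3 tc3 = 0

theorem superpotential_conj (l1 l2 l3 l4 l5 c1 tc1 c2 tc2 c3 tc3 : R) :
    superpotential l2 l1 l3 l4 l5 tc1 c1 tc2 c2 tc3 c3 =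
      superpotential l1 l2 l3 l4 l5 c1 tc1 c2 tc2 c3 tc3 := by
  simp only [superpotential]
  ring

theorem superpotential_rotate (l1 l2 l3 l4 l5 c1 tc1 c2 tc2 c3 tc3 : R) :
    superpotential l1 l2 l4 l5 l3 tc2 c2 c3 tc3 tc1 c1 =
      superpotential l1 l2 l3 l4 l5 c1 tc1 c2 tc2 c3 tc3 := by
  simp only [superpotential]
  ring

namespace IsMinkowskiVacuum

variable {l1 l2 l3 l4 l5 c1 tc1 c2 tc2 c3 tc3 : R}

theorem conj (h : IsMinkowskiVacuum l1 l2 l3 l4 l5 c1 tc1 c2 tc2 c3 tc3) :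
    IsMinkowskiVacuum l2 l1 l3 l4 l5 tc1 c1 tc2 c2 tc3 c3 where
  fTerm_c1 := h.fTerm_tc1
  fTerm_tc1 := h.fTerm_c1
  fTerm_c2 := h.fTerm_tc2
  fTerm_tc2 := h.fTerm_c2
  fTerm_c3 := h.fTerm_tc3
  fTerm_tc3 := h.fTerm_c3
  superpotential_eq_zero := (superpotential_conj ..).trans h.superpotential_eq_zero

theorem rotate (h : IsMinkowskiVacuum l1 l2 l3 l4 l5 c1 tc1 c2 tc2 c3 tc3) :
    IsMinkowskiVacuum l1 l2 l4 l5 l3 tc2 c2 c3 tc3 tc1 c1 where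
  fTerm_c1 := h.fTerm_tc2
  fTerm_tc1 := h.fTerm_c2
  fTerm_c2 := h.fTerm_c3
  fTerm_tc2 := h.fTerm_tc3
  fTerm_c3 := h.fTerm_tc1
  fTerm_tc3 := h.fTerm_c1
  superpotential_eq_zero := (superpotential_rotate ..).trans h.superpotential_eq_zero

theorem cubic_eq_zero (h : IsMinkowskiVacuum l1 l2 l3 l4 l5 c1 tc1 c2 tc2 c3 tc3) :
    l1 * c1 * tc2 * tc3 = 0 := by
  obtain ⟨hc1, htc1, -, htc2, -, htc3, hW⟩ := h
  simp only [fTerm, superpotential] at hc1 htc1 htc2 htc3 hW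
  linear_combination 2 * hW + c1 * hc1 - 2 * tc1 * htc1 - tc2 * htc2 - tc3 * htc3

variable [NoZeroDivisors R]

theorem two_mul_c1_mul_tc1_eq_zero (h : IsMinkowskiVacuum l1 l2 l3 l4 l5 c1 tc1 c2 tc2 c3 tc3)
    (hl3 : l3 ≠ 0) : 2 * (c1 * tc1) = 0 := by
  have hc1 := h.fTerm_c1
  simp only [fTerm] at hc1
  have hsq : l3 * (2 * (c1 * tc1)) ^ 2 = 0 := by
    linear_combination 2 * c1 * hc1 - 2 * h.cubic_eq_zero
  exact eq_zero_of_pow_eq_zero ((mul_eq_zero.mp hsq).resolve_left hl3)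

theorem tc2_mul_tc3_eq_zero (h : IsMinkowskiVacuum l1 l2 l3 l4 l5 c1 tc1 c2 tc2 c3 tc3)
    (hl1 : l1 ≠ 0) (hl3 : l3 ≠ 0) : tc2 * tc3 = 0 := by
  have hc1 := h.fTerm_c1
  simp only [fTerm] at hc1
  have hcubic : l1 * (tc2 * tc3) = 0 := by
    linear_combination hc1 - l3 * tc1 * h.two_mul_c1_mul_tc1_eq_zero hl3
  exact (mul_eq_zero.mp hcubic).resolve_left hl1

theorem c1_mul_tc2_eq_zero (h : IsMinkowskiVacuum l1 l2 l3 l4 l5 c1 tc1 c2 tc2 c3 tc3)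
    (hl1 : l1 ≠ 0) (hl5 : l5 ≠ 0) : c1 * tc2 = 0 :=
  h.rotate.rotate.tc2_mul_tc3_eq_zero hl1 hl5

theorem c1_mul_tc3_eq_zero (h : IsMinkowskiVacuum l1 l2 l3 l4 l5 c1 tc1 c2 tc2 c3 tc3)
    (hl1 : l1 ≠ 0) (hl4 : l4 ≠ 0) : c1 * tc3 = 0 :=
  mul_comm tc3 c1 ▸ h.rotate.tc2_mul_tc3_eq_zero hl1 hl4

theorem c1_mul_tc1_eq_zero (h : IsMinkowskiVacuum l1 l2 l3 l4 l5 c1 tc1 c2 tc2 c3 tc3)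
    (hl1 : l1 ≠ 0) (hl3 : l3 ≠ 0) (hl4 : l4 ≠ 0) (hl5 : l5 ≠ 0) : c1 * tc1 = 0 := by
  have hW := h.superpotential_eq_zero
  simp only [superpotential] at hW
  have hx₁x₂ : c1 * tc1 * (c2 * tc2) = 0 := by
    linear_combination tc1 * c2 * h.c1_mul_tc2_eq_zero hl1 hl5
  have hx₁x₃ : c1 * tc1 * (c3 * tc3) = 0 := by
    linear_combination tc1 * c3 * h.c1_mul_tc3_eq_zero hl1 hl4
  have hquartic : l3 * (c1 * tc1) ^ 2 + l4 * (c2 * tc2) ^ 2 + l5 * (c3 * tc3) ^ 2 = 0 := by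
    linear_combination hW - h.cubic_eq_zero - h.conj.cubic_eq_zero
  have hcube : l3 * (c1 * tc1) ^ 3 = 0 := by
    linear_combination c1 * tc1 * hquartic - l4 * (c2 * tc2) * hx₁x₂ - l5 * (c3 * tc3) * hx₁x₃
  exact eq_zero_of_pow_eq_zero ((mul_eq_zero.mp hcube).resolve_left hl3)

end IsMinkowskiVacuum

theorem stmt0_general [NoZeroDivisors R] {l1 l2 l3 l4 l5 c1 tc1 c2 tc2 c3 tc3 : R}
    (hl1 : l1 ≠ 0) (hl2 : l2 ≠ 0) (hl3 : l3 ≠ 0) (hl4 : l4 ≠ 0) (hl5 : l5 ≠ 0)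
    (h : IsMinkowskiVacuum l1 l2 l3 l4 l5 c1 tc1 c2 tc2 c3 tc3) :
    c1 * tc1 = 0 ∧ c2 * tc2 = 0 ∧ c3 * tc3 = 0 ∧
    c1 * tc2 = 0 ∧ c1 * tc3 = 0 ∧ tc2 * tc3 = 0 ∧
    tc1 * c2 = 0 ∧ tc1 * c3 = 0 ∧ c2 * c3 = 0 :=
  ⟨h.c1_mul_tc1_eq_zero hl1 hl3 hl4 hl5,
    h.conj.rotate.c1_mul_tc1_eq_zero hl2 hl4 hl5 hl3,
    h.conj.rotate.rotate.c1_mul_tc1_eq_zero hl2 hl5 hl3 hl4,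
    h.c1_mul_tc2_eq_zero hl1 hl5, h.c1_mul_tc3_eq_zero hl1 hl4, h.tc2_mul_tc3_eq_zero hl1 hl3,
    h.conj.c1_mul_tc2_eq_zero hl2 hl5, h.conj.c1_mul_tc3_eq_zero hl2 hl4,
    h.conj.tc2_mul_tc3_eq_zero hl2 hl3⟩

end Algebra

section Derivative

variable {𝕜 : Type*} [NontriviallyNormedField 𝕜]

theorem deriv_eq_fTerm {f : 𝕜 → 𝕜} {l m y u v : 𝕜}
    (hf : ∀ z, f z = f 0 + l * u * v * z + m * (z * y) ^ 2) (x : 𝕜) :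
    deriv f x = fTerm l m x y u v := by
  have hlin : HasDerivAt (fun z => f 0 + l * u * v * z) (l * u * v * 1) x :=
    ((hasDerivAt_id x).const_mul _).const_add _
  have hquad : HasDerivAt (fun z => m * (z * y) ^ 2) (m * (2 * (x * y) * y)) x := by
    simpa using (((hasDerivAt_id x).mul_const y).pow 2).const_mul m
  calc deriv f x = l * u * v * 1 + m * (2 * (x * y) * y) := by
        rw [funext hf]
        exact (hlin.add hquad).deriv
    _ = fTerm l m x y u v := by
        simp only [fTerm]
        ring

theorem isMinkowskiVacuum_of_deriv_eq_zero {l1 l2 l3 l4 l5 c1 tc1 c2 tc2 c3 tc3 : 𝕜}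
    (hd1 : deriv (fun z => superpotential l1 l2 l3 l4 l5 z tc1 c2 tc2 c3 tc3) c1 = 0)
    (hd2 : deriv (fun z => superpotential l1 l2 l3 l4 l5 c1 z c2 tc2 c3 tc3) tc1 = 0)
    (hd3 : deriv (fun z => superpotential l1 l2 l3 l4 l5 c1 tc1 z tc2 c3 tc3) c2 = 0)
    (hd4 : deriv (fun z => superpotential l1 l2 l3 l4 l5 c1 tc1 c2 z c3 tc3) tc2 = 0)
    (hd5 : deriv (fun z => superpotential l1 l2 l3 l4 l5 c1 tc1 c2 tc2 z tc3) c3 = 0)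
    (hd6 : deriv (fun z => superpotential l1 l2 l3 l4 l5 c1 tc1 c2 tc2 c3 z) tc3 = 0)
    (hW : superpotential l1 l2 l3 l4 l5 c1 tc1 c2 tc2 c3 tc3 = 0) :
    IsMinkowskiVacuum l1 l2 l3 l4 l5 c1 tc1 c2 tc2 c3 tc3 := by
  refine ⟨hd1 ▸ (deriv_eq_fTerm ?_ c1).symm, hd2 ▸ (deriv_eq_fTerm ?_ tc1).symm,
    hd3 ▸ (deriv_eq_fTerm ?_ c2).symm, hd4 ▸ (deriv_eq_fTerm ?_ tc2).symm,
    hd5 ▸ (deriv_eq_fTerm ?_ c3).symm, hd6 ▸ (deriv_eq_fTerm ?_ tc3).symm, hW⟩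
  all_goals
    intro z
    simp only [superpotential]
    ring

end Derivative

/-- At a critical point of the superpotential
`W = λ₁ c₁ c̃₂ c̃₃ + λ₂ c̃₁ c₂ c₃ + λ₃ (c₁ c̃₁)² + λ₄ (c₂ c̃₂)² + λ₅ (c₃ c̃₃)²`
(all six complex partial derivatives vanish) where moreover `W = 0`,
all nine of the indicated products of coordinates vanish. -/
theorem stmt0 (l1 l2 l3 l4 l5 : ℂ)
    (hl1 : l1 ≠ 0) (hl2 : l2 ≠ 0) (hl3 : l3 ≠ 0) (hl4 : l4 ≠ 0) (hl5 : l5 ≠ 0)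
    (c1 tc1 c2 tc2 c3 tc3 : ℂ)
    (hd1 : deriv (fun z : ℂ => l1 * z * tc2 * tc3 + l2 * tc1 * c2 * c3 +
      l3 * (z * tc1) ^ 2 + l4 * (c2 * tc2) ^ 2 + l5 * (c3 * tc3) ^ 2) c1 = 0)
    (hd2 : deriv (fun z : ℂ => l1 * c1 * tc2 * tc3 + l2 * z * c2 * c3 +
      l3 * (c1 * z) ^ 2 + l4 * (c2 * tc2) ^ 2 + l5 * (c3 * tc3) ^ 2) tc1 = 0)
    (hd3 : deriv (fun z : ℂ => l1 * c1 * tc2 * tc3 + l2 * tc1 * z * c3 +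
      l3 * (c1 * tc1) ^ 2 + l4 * (z * tc2) ^ 2 + l5 * (c3 * tc3) ^ 2) c2 = 0)
    (hd4 : deriv (fun z : ℂ => l1 * c1 * z * tc3 + l2 * tc1 * c2 * c3 +
      l3 * (c1 * tc1) ^ 2 + l4 * (c2 * z) ^ 2 + l5 * (c3 * tc3) ^ 2) tc2 = 0)
    (hd5 : deriv (fun z : ℂ => l1 * c1 * tc2 * tc3 + l2 * tc1 * c2 * z +
      l3 * (c1 * tc1) ^ 2 + l4 * (c2 * tc2) ^ 2 + l5 * (z * tc3) ^ 2) c3 = 0)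
    (hd6 : deriv (fun z : ℂ => l1 * c1 * tc2 * z + l2 * tc1 * c2 * c3 +
      l3 * (c1 * tc1) ^ 2 + l4 * (c2 * tc2) ^ 2 + l5 * (c3 * z) ^ 2) tc3 = 0)
    (hW : l1 * c1 * tc2 * tc3 + l2 * tc1 * c2 * c3 +
      l3 * (c1 * tc1) ^ 2 + l4 * (c2 * tc2) ^ 2 + l5 * (c3 * tc3) ^ 2 = 0) :
    c1 * tc1 = 0 ∧ c2 * tc2 = 0 ∧ c3 * tc3 = 0 ∧
    c1 * tc2 = 0 ∧ c1 * tc3 = 0 ∧ tc2 * tc3 = 0 ∧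
    tc1 * c2 = 0 ∧ tc1 * c3 = 0 ∧ c2 * c3 = 0 :=
  stmt0_general hl1 hl2 hl3 hl4 hl5
    (isMinkowskiVacuum_of_deriv_eq_zero hd1 hd2 hd3 hd4 hd5 hd6 hW)
end

section
/- Let $(p_1,q_1),(p_2,q_2),(p_3,q_3)\in\mathbb{Z}^2$ satisfy: (i) $p_1+p_2+p_3=0$ and $q_1+q_2+q_3=0$; (ii) $\sum_{i=1}^3 2q_i^2=12$; (iii) $\sum_{i=1}^3 (4p_iq_i+q_i^2)=-18$; (iv) $\sum_{i=1}^3 (q_i^3+6p_iq_i^2)=-30$; and (v) there exist real numbers $t^1,t^2>0$ such that for every $i$, $4p_i(t^2)^2+8q_i t^1 t^2+2q_i(t^2)^2=0$. Then, up to permutation of the indices, $(p_1,q_1)=(-2,2)$ and $(p_2,q_2)=(p_3,q_3)=(1,-1)$. -/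
/-!
Multiplying the slope equations by `qᵢ` and summing gives
`2 t₂ ∑ pᵢ qᵢ + (4 t₁ + t₂) ∑ qᵢ² = 0`. Conditions (ii) and (iii) say `∑ qᵢ² = 6` and
`∑ pᵢ qᵢ = -6`, so the wall is the ray `t₂ = 4 t₁`, on which the slopes vanish exactly when
`pᵢ = -qᵢ`. Condition (iv) then becomes `∑ qᵢ³ = 6`, so the `qᵢ` have the same power sums of
degree at most three as `2, -1, -1`. By Newton's identities they are these numbers, whatever domain
of characteristic zero they are taken from.
-/

section PowerSums

variable {ι R : Type*} [Fintype ι] [CommRing R] [IsDomain R] [CharZero R]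

open MvPolynomial in
theorem esymm_map_eq_of_sum_pow_eq {f g : ι → R} {n : ℕ}
    (h : ∀ k ∈ Finset.Icc 1 n, ∑ i, f i ^ k = ∑ i, g i ^ k) {k : ℕ} (hk : k ≤ n) :
    (Finset.univ.val.map f).esymm k = (Finset.univ.val.map g).esymm k := by
  simp only [← aeval_esymm_eq_multiset_esymm ι ℤ]
  induction k using Nat.strong_induction_on with
  | _ k ih =>
    rcases Nat.eq_zero_or_pos k with rfl | hpos
    · simp only [esymm_zero, map_one]
    have newton (e : ι → R) : (k : R) * aeval e (esymm ι ℤ k) = (-1) ^ (k + 1) *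
        ∑ a ∈ Finset.HasAntidiagonal.antidiagonal k with a.1 < k,
          (-1) ^ a.1 * aeval e (esymm ι ℤ a.1) * ∑ i, e i ^ a.2 := by
      simpa [psum] using congrArg (aeval e) (mul_esymm_eq_sum ι ℤ k)
    refine mul_left_cancel₀ (Nat.cast_ne_zero.mpr hpos.ne' : (k : R) ≠ 0) ?_
    rw [newton f, newton g]
    refine congrArg _ (Finset.sum_congr rfl fun a ha ↦ ?_)
    obtain ⟨hsum, hlt⟩ := Finset.mem_filter.mp ha
    rw [Finset.HasAntidiagonal.mem_antidiagonal] at hsum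
    rw [ih a.1 hlt (by lia), h a.2 (Finset.mem_Icc.mpr (by lia))]

open Polynomial in
theorem map_univ_eq_of_sum_pow_eq {f g : ι → R}
    (h : ∀ k ∈ Finset.Icc 1 (Fintype.card ι), ∑ i, f i ^ k = ∑ i, g i ^ k) :
    Finset.univ.val.map f = Finset.univ.val.map g := by
  have hprod : ((Finset.univ.val.map f).map fun a ↦ X - C a).prod =
      ((Finset.univ.val.map g).map fun a ↦ X - C a).prod := by
    simp only [Multiset.prod_X_sub_X_eq_sum_esymm, Multiset.card_map, Finset.card_val,
      Finset.card_univ]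
    refine Finset.sum_congr rfl fun k hk ↦ ?_
    rw [esymm_map_eq_of_sum_pow_eq h (Finset.mem_range_succ_iff.mp hk)]
  simpa only [roots_multiset_prod_X_sub_C] using congrArg roots hprod

end PowerSums

theorem multiset_triple_eq_triple_self_iff {α : Type*} {a b c x y : α} :
    ({a, b, c} : Multiset α) = {x, y, y} ↔
      (a = x ∧ b = y ∧ c = y) ∨ (b = x ∧ a = y ∧ c = y) ∨ (c = x ∧ a = y ∧ b = y) := by
  have pair_eq {u v : α} : ({u, v} : Multiset α) = {y, y} ↔ u = y ∧ v = y := by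
    simpa using Multiset.eq_replicate (a := y) (n := 2) (s := {u, v})
  have swap_left : ({a, b, c} : Multiset α) = {b, a, c} := Multiset.cons_swap a b {c}
  have rotate : ({a, b, c} : Multiset α) = {c, a, b} := by
    rw [Multiset.pair_comm b c]
    exact Multiset.cons_swap a c {b}
  constructor
  · intro h
    have hx : x ∈ ({a, b, c} : Multiset α) := h ▸ Multiset.mem_cons_self x {y, y}
    simp only [Multiset.insert_eq_cons, Multiset.mem_cons, Multiset.mem_singleton] at hx
    rcases hx with rfl | rfl | rfl
    · exact .inl ⟨rfl, pair_eq.mp ((Multiset.cons_inj_right x).mp h)⟩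
    · exact .inr (.inl ⟨rfl, pair_eq.mp ((Multiset.cons_inj_right x).mp (swap_left.symm.trans h))⟩)
    · exact .inr (.inr ⟨rfl, pair_eq.mp ((Multiset.cons_inj_right x).mp (rotate.symm.trans h))⟩)
  · rintro (⟨rfl, rfl, rfl⟩ | ⟨rfl, rfl, rfl⟩ | ⟨rfl, rfl, rfl⟩)
    exacts [rfl, swap_left, rotate]

section Slope

variable {R : Type*} [CommRing R]

/-- The slope `μ(𝒪(p, q))` on the `(2,4)` hypersurface at `(t₁, t₂)`, the paper's `(t¹, t²)`; on a
stability wall it vanishes for every summand. Bidegree and Kähler parameters are taken in one ring,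
so that integral bidegrees and real parameters both embed. -/
def lineBundleSlope (p q t₁ t₂ : R) : R :=
  4 * p * t₂ ^ 2 + 8 * q * t₁ * t₂ + 2 * q * t₂ ^ 2

variable [IsDomain R] [CharZero R]

theorem lineBundleSlope_eq_zero_iff {p q t₁ t₂ : R} (ht₂ : t₂ ≠ 0) :
    lineBundleSlope p q t₁ t₂ = 0 ↔ 2 * t₂ * p + (4 * t₁ + t₂) * q = 0 := by
  have factored : lineBundleSlope p q t₁ t₂ =
      2 * t₂ * (2 * t₂ * p + (4 * t₁ + t₂) * q) := by
    unfold lineBundleSlope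
    ring
  rw [factored, mul_eq_zero_iff_left (mul_ne_zero two_ne_zero ht₂)]

theorem lineBundleSlope_four_mul_eq_zero_iff {p q t : R} (ht : t ≠ 0) :
    lineBundleSlope p q t (4 * t) = 0 ↔ p = -q := by
  have factored : 2 * (4 * t) * p + (4 * t + 4 * t) * q = 8 * t * (p + q) := by ring
  rw [lineBundleSlope_eq_zero_iff (mul_ne_zero (OfNat.ofNat_ne_zero 4) ht), factored,
    mul_eq_zero_iff_left (mul_ne_zero (OfNat.ofNat_ne_zero 8) ht), add_eq_zero_iff_eq_neg]

variable {ι : Type*} {s : Finset ι} {p q : ι → R} {t₁ t₂ : R}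

theorem sum_mul_add_sum_sq_eq_zero_of_lineBundleSlope_eq_zero (ht₂ : t₂ ≠ 0)
    (hslope : ∀ i ∈ s, lineBundleSlope (p i) (q i) t₁ t₂ = 0) :
    2 * t₂ * ∑ i ∈ s, p i * q i + (4 * t₁ + t₂) * ∑ i ∈ s, q i ^ 2 = 0 := by
  rw [Finset.mul_sum, Finset.mul_sum, ← Finset.sum_add_distrib]
  refine Finset.sum_eq_zero fun i hi ↦ ?_
  linear_combination q i * (lineBundleSlope_eq_zero_iff ht₂).mp (hslope i hi)

theorem eq_neg_of_lineBundleSlope_eq_zero (ht₂ : t₂ ≠ 0)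
    (hslope : ∀ i ∈ s, lineBundleSlope (p i) (q i) t₁ t₂ = 0)
    (hpq : ∑ i ∈ s, p i * q i = -∑ i ∈ s, q i ^ 2) (hq : ∑ i ∈ s, q i ^ 2 ≠ 0) :
    ∀ i ∈ s, p i = -q i := by
  have wall : t₂ = 4 * t₁ := by
    have hsum := sum_mul_add_sum_sq_eq_zero_of_lineBundleSlope_eq_zero ht₂ hslope
    refine mul_right_cancel₀ hq ?_
    linear_combination 2 * t₂ * hpq - hsum
  subst wall
  exact fun i hi ↦
    (lineBundleSlope_four_mul_eq_zero_iff (right_ne_zero_of_mul ht₂)).mp (hslope i hi)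

end Slope

section Triples

variable {R : Type*} [CommRing R] [IsDomain R] [CharZero R] {p₁ q₁ p₂ q₂ p₃ q₃ : R}

theorem triple_eq_two_neg_one_neg_one_of_sum_pow (h₁ : q₁ + q₂ + q₃ = 0)
    (h₂ : q₁ ^ 2 + q₂ ^ 2 + q₃ ^ 2 = 6) (h₃ : q₁ ^ 3 + q₂ ^ 3 + q₃ ^ 3 = 6) :
    ({q₁, q₂, q₃} : Multiset R) = {2, -1, -1} := by
  refine map_univ_eq_of_sum_pow_eq (f := ![q₁, q₂, q₃]) (g := ![2, -1, -1]) fun k hk ↦ ?_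
  rw [Fintype.card_fin, Finset.mem_Icc] at hk
  obtain ⟨hk_pos, hk_le⟩ := hk
  simp only [Fin.sum_univ_three, Matrix.cons_val]
  interval_cases k
  · linear_combination h₁
  · linear_combination h₂
  · linear_combination h₃

theorem stmt4_general {t₁ t₂ : R} (ht₂ : t₂ ≠ 0) (h₁ : q₁ + q₂ + q₃ = 0)
    (h₂ : 2 * q₁ ^ 2 + 2 * q₂ ^ 2 + 2 * q₃ ^ 2 = 12)
    (h₃ : (4 * p₁ * q₁ + q₁ ^ 2) + (4 * p₂ * q₂ + q₂ ^ 2) + (4 * p₃ * q₃ + q₃ ^ 2) = -18)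
    (h₄ : (q₁ ^ 3 + 6 * p₁ * q₁ ^ 2) + (q₂ ^ 3 + 6 * p₂ * q₂ ^ 2) +
      (q₃ ^ 3 + 6 * p₃ * q₃ ^ 2) = -30)
    (hslope₁ : lineBundleSlope p₁ q₁ t₁ t₂ = 0) (hslope₂ : lineBundleSlope p₂ q₂ t₁ t₂ = 0)
    (hslope₃ : lineBundleSlope p₃ q₃ t₁ t₂ = 0) :
    ((p₁, q₁) = (-2, 2) ∧ (p₂, q₂) = (1, -1) ∧ (p₃, q₃) = (1, -1)) ∨
    ((p₂, q₂) = (-2, 2) ∧ (p₁, q₁) = (1, -1) ∧ (p₃, q₃) = (1, -1)) ∨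
    ((p₃, q₃) = (-2, 2) ∧ (p₁, q₁) = (1, -1) ∧ (p₂, q₂) = (1, -1)) := by
  have sum_sq : q₁ ^ 2 + q₂ ^ 2 + q₃ ^ 2 = 6 :=
    mul_left_cancel₀ two_ne_zero (by linear_combination h₂)
  have sum_mul : p₁ * q₁ + p₂ * q₂ + p₃ * q₃ = -6 :=
    mul_left_cancel₀ (OfNat.ofNat_ne_zero 4) (by linear_combination h₃ - sum_sq)
  have eq_neg : p₁ = -q₁ ∧ p₂ = -q₂ ∧ p₃ = -q₃ := by
    simpa [Fin.forall_fin_succ] using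
      eq_neg_of_lineBundleSlope_eq_zero (s := .univ) (p := ![p₁, p₂, p₃]) (q := ![q₁, q₂, q₃])
        (t₁ := t₁) ht₂
        (by simp [Fin.forall_fin_succ, hslope₁, hslope₂, hslope₃])
        (by simp [Fin.sum_univ_three, sum_mul, sum_sq]) (by simp [Fin.sum_univ_three, sum_sq])
  obtain ⟨rfl, rfl, rfl⟩ := eq_neg
  have sum_cube : q₁ ^ 3 + q₂ ^ 3 + q₃ ^ 3 = 6 :=
    mul_left_cancel₀ (OfNat.ofNat_ne_zero 5) (by linear_combination -h₄)
  rcases multiset_triple_eq_triple_self_iff.mp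
      (triple_eq_two_neg_one_neg_one_of_sum_pow h₁ sum_sq sum_cube) with
    ⟨rfl, rfl, rfl⟩ | ⟨rfl, rfl, rfl⟩ | ⟨rfl, rfl, rfl⟩ <;> simp

end Triples

/-- the Chern-class constraints (i)-(iv) for a wall decomposition of a rank-3
bundle with total Chern class `c = (3,0,(-12,18),-20)` on the `(2,4)` CICY, together with
the existence of a common point `(t¹,t²)` of the (positive-quadrant) Kähler cone where all
three line-bundle slopes vanish, force, up to permutation of the indices,
`(p₁,q₁) = (-2,2)` and `(p₂,q₂) = (p₃,q₃) = (1,-1)`. -/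
theorem stmt4 (p1 q1 p2 q2 p3 q3 : ℤ)
    (h1 : p1 + p2 + p3 = 0) (h1' : q1 + q2 + q3 = 0)
    (h2 : 2 * q1 ^ 2 + 2 * q2 ^ 2 + 2 * q3 ^ 2 = 12)
    (h3 : (4 * p1 * q1 + q1 ^ 2) + (4 * p2 * q2 + q2 ^ 2) + (4 * p3 * q3 + q3 ^ 2) = -18)
    (h4 : (q1 ^ 3 + 6 * p1 * q1 ^ 2) + (q2 ^ 3 + 6 * p2 * q2 ^ 2) +
      (q3 ^ 3 + 6 * p3 * q3 ^ 2) = -30)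
    (h5 : ∃ t1 t2 : ℝ, 0 < t1 ∧ 0 < t2 ∧
      4 * (p1 : ℝ) * t2 ^ 2 + 8 * (q1 : ℝ) * t1 * t2 + 2 * (q1 : ℝ) * t2 ^ 2 = 0 ∧
      4 * (p2 : ℝ) * t2 ^ 2 + 8 * (q2 : ℝ) * t1 * t2 + 2 * (q2 : ℝ) * t2 ^ 2 = 0 ∧
      4 * (p3 : ℝ) * t2 ^ 2 + 8 * (q3 : ℝ) * t1 * t2 + 2 * (q3 : ℝ) * t2 ^ 2 = 0) :
    ((p1, q1) = (-2, 2) ∧ (p2, q2) = (1, -1) ∧ (p3, q3) = (1, -1)) ∨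
    ((p2, q2) = (-2, 2) ∧ (p1, q1) = (1, -1) ∧ (p3, q3) = (1, -1)) ∨
    ((p3, q3) = (-2, 2) ∧ (p1, q1) = (1, -1) ∧ (p2, q2) = (1, -1)) := by
  obtain ⟨t1, t2, -, ht2, hslope⟩ := h5
  have hreal := stmt4_general ht2.ne' (mod_cast h1') (mod_cast h2) (mod_cast h3) (mod_cast h4)
    hslope.1 hslope.2.1 hslope.2.2
  simp only [Prod.mk.injEq] at hreal ⊢
  exact_mod_cast hreal
end
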